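/- arXiv:1908.01749 — 3 statements merged into one kernel-verified Lean document; each statement's English description precedes it below -/
import Mathlib

section
/- Let R be a Noetherian local ring whose total quotient ring Q is semisimple, and M a finite R-module with a resolution 0 → F₁ →^φ F₀ → M → 0 by finite free modules. For k ≥ 1, M is k-torsion free (i.e., Ext^i_R(D(M), R) = 0 for 1 ≤ i ≤ k, where D(M) = Coker(φ*)) if and only if depth(R_𝔭) ≥ k+1 for every prime 𝔭 in the support of D(M). -/
/-!
Write `grade(N, M)` for the least `i` with `Ext^i(N, M) ≠ 0`. For finite modules over a Noetherian
ring, `grade(N, M)` is the infimum of `depth M_𝔭` over `𝔭 ∈ Supp N`: if some `r ∈ ann N` is regular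
on `M`, then `r` kills `Ext(N, M)`, so replacing `M` by `M / rM` lowers both sides by one; if there
is no such `r`, prime avoidance puts `ann N` inside an associated prime of `M`, and both sides
vanish. For `N = D(M) = Coker(φ*)` and the module `R`, the group `Ext^0(D(M), R) = ker φ** = ker φ`
is zero, so vanishing in degrees `1, …, k` means `grade(D(M), R) ≥ k + 1`.
-/

open CategoryTheory

noncomputable def extGroup (R : Type) [CommRing R] (i : ℕ) (M N : Type)
    [AddCommGroup M] [Module R M] [AddCommGroup N] [Module R N] : Type :=
  ((Ext R (ModuleCat R) i).obj (Opposite.op (ModuleCat.of R M))).obj (ModuleCat.of R N)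

noncomputable instance (R : Type) [CommRing R] (i : ℕ) (M N : Type)
    [AddCommGroup M] [Module R M] [AddCommGroup N] [Module R N] :
    AddCommGroup (extGroup R i M N) := by unfold extGroup; infer_instance

noncomputable instance (R : Type) [CommRing R] (i : ℕ) (M N : Type)
    [AddCommGroup M] [Module R M] [AddCommGroup N] [Module R N] :
    Module R (extGroup R i M N) := by unfold extGroup; infer_instance

/-- The depth of a Noetherian local ring `A`, i.e. `grade(𝔪, A)`:
the least `i` with `Ext^i_A(A/𝔪, A) ≠ 0`. -/
noncomputable def depthOf (A : Type) [CommRing A] [IsLocalRing A] : ℕ :=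
  sInf {i | Nontrivial (extGroup A i (IsLocalRing.ResidueField A) A)}

universe w v u

section DerivedHom

variable (R : Type*) [Ring R] {C : Type u} [Category.{v} C] [Abelian C] [Linear R C]

instance preservesFiniteLimits_linearYoneda_obj (Y : C) :
    Limits.PreservesFiniteLimits ((linearYoneda R C).obj Y) := by
  have : Limits.PreservesFiniteLimits ((linearYoneda R C).obj Y ⋙ forget (ModuleCat.{v} R)) :=
    inferInstanceAs (Limits.PreservesFiniteLimits (yoneda.obj Y))
  exact Limits.preservesFiniteLimits_of_reflects_of_preserves _ (forget (ModuleCat.{v} R))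

variable [EnoughProjectives C] (X Y : C)

theorem subsingleton_Ext_zero_iff :
    Subsingleton (((Ext R C 0).obj (Opposite.op X)).obj Y) ↔ Subsingleton (X ⟶ Y) := by
  have := Limits.preservesFiniteColimits_rightOp ((linearYoneda R C).obj Y)
  let e : ((Ext R C 0).obj (Opposite.op X)).obj Y ≅ ModuleCat.of R (X ⟶ Y) :=
    (((linearYoneda R C).obj Y).rightOp.leftDerivedZeroIsoSelf.app X).unop.symm
  exact e.toLinearEquiv.toEquiv.subsingleton_congr

variable [HasExt.{w} C]

theorem subsingleton_Ext_succ_iff (n : ℕ) :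
    Subsingleton (((Ext R C (n + 1)).obj (Opposite.op X)).obj Y) ↔
      Subsingleton (Abelian.Ext X Y (n + 1)) := by
  let P := projectiveResolution X
  rw [← ModuleCat.isZero_iff_subsingleton, (P.isoExt (n + 1) Y).isZero_iff,
    ← HomologicalComplex.exactAt_iff_isZero_homology,
    HomologicalComplex.exactAt_iff' _ n (n + 1) (n + 2) (by simp) (by simp),
    ShortComplex.moduleCat_exact_iff]
  constructor
  · intro h
    refine subsingleton_of_forall_eq 0 fun α ↦ ?_
    obtain ⟨f, hf, rfl⟩ := P.extMk_surjective α (n + 2) rfl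
    exact (P.extMk_eq_zero_iff f _ rfl hf n rfl).2 (h f hf)
  · intro h f hf
    exact (P.extMk_eq_zero_iff f (n + 2) rfl hf n rfl).1 (Subsingleton.elim _ _)

theorem subsingleton_Ext_iff (n : ℕ) :
    Subsingleton (((Ext R C n).obj (Opposite.op X)).obj Y) ↔
      Subsingleton (Abelian.Ext X Y n) := by
  cases n with
  | zero =>
    exact (subsingleton_Ext_zero_iff R X Y).trans Abelian.Ext.addEquiv₀.subsingleton_congr.symm
  | succ n => exact subsingleton_Ext_succ_iff R X Y n

end DerivedHom

theorem subsingleton_extGroup_iff (R : Type) [CommRing R] (i : ℕ) (M N : Type)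
    [AddCommGroup M] [Module R M] [AddCommGroup N] [Module R N] :
    Subsingleton (extGroup R i M N) ↔
      Subsingleton (Abelian.Ext (ModuleCat.of R M) (ModuleCat.of R N) i) :=
  subsingleton_Ext_iff R _ _ i

section Grade

variable {C : Type u} [Category.{v} C] [Abelian C] [HasExt.{w} C]

/-- The grade of `X` on `Y`: the least `i` with `Ext^i(X, Y) ≠ 0`, and `⊤` if there is none. -/
noncomputable def extGrade (X Y : C) : ℕ∞ :=
  ⨅ (i : ℕ) (_ : Nontrivial (Abelian.Ext X Y i)), (i : ℕ∞)

theorem natCast_le_extGrade_iff {X Y : C} {n : ℕ} :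
    (n : ℕ∞) ≤ extGrade X Y ↔ ∀ i < n, Subsingleton (Abelian.Ext X Y i) := by
  simp only [extGrade, le_iInf_iff, Nat.cast_le, ← not_nontrivial_iff_subsingleton]
  exact forall_congr' fun i ↦ by rw [← not_lt, imp_not_comm]

theorem one_le_extGrade_iff {X Y : C} : 1 ≤ extGrade X Y ↔ Subsingleton (X ⟶ Y) := by
  rw [← Nat.cast_one, natCast_le_extGrade_iff, ← Abelian.Ext.addEquiv₀.subsingleton_congr]
  simp

theorem extGrade_congr_right (X : C) {Y Y' : C} (e : Y ≅ Y') : extGrade X Y = extGrade X Y' := by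
  have h (i : ℕ) : Nontrivial (Abelian.Ext X Y i) ↔ Nontrivial (Abelian.Ext X Y' i) :=
    ((Abelian.extFunctorObj X i).mapIso e).addCommGroupIsoToAddEquiv.nontrivial_congr
  simp only [extGrade, h]

theorem natCast_add_one_le_extGrade_iff {R : Type*} [CommRing R] [Linear R C] {X Y Z : C} {r : R}
    (hr : r • 𝟙 X = 0) {f : Y ⟶ Y} (hf : f = r • 𝟙 Y) {g : Y ⟶ Z} {w : f ≫ g = 0}
    (hS : (ShortComplex.mk f g w).ShortExact) (n : ℕ) :
    ((n + 1 : ℕ) : ℕ∞) ≤ extGrade X Y ↔ (n : ℕ∞) ≤ extGrade X Z := by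
  have comp_f_eq_zero {i : ℕ} (x : Abelian.Ext X Y i) :
      x.comp (Abelian.Ext.mk₀ f) (add_zero i) = 0 := by
    calc x.comp (Abelian.Ext.mk₀ f) (add_zero i)
      _ = (Abelian.Ext.mk₀ (r • 𝟙 X)).comp x (zero_add i) := by
        simp [hf, Abelian.Ext.mk₀_smul]
      _ = 0 := by rw [hr, Abelian.Ext.mk₀_zero, Abelian.Ext.zero_comp]
  simp only [natCast_le_extGrade_iff]
  constructor
  · intro h i hi
    have := h i (by lia)
    have := h (i + 1) (by lia)
    refine subsingleton_of_forall_eq 0 fun z ↦ ?_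
    obtain ⟨y, rfl⟩ := Abelian.Ext.covariant_sequence_exact₃ X hS z rfl
      (Subsingleton.elim (α := Abelian.Ext X Y (i + 1)) _ _)
    rw [Subsingleton.elim (α := Abelian.Ext X Y i) y 0, Abelian.Ext.zero_comp]
  · rintro h (_ | i) hi
    · have := hS.mono_f
      refine subsingleton_of_forall_eq 0 fun x ↦ ?_
      exact Abelian.Ext.postcomp_mk₀_injective_of_mono X f
        ((comp_f_eq_zero x).trans (map_zero _).symm)
    · have := h i (by lia)
      refine subsingleton_of_forall_eq 0 fun x ↦ ?_
      obtain ⟨z, rfl⟩ := Abelian.Ext.covariant_sequence_exact₁ X hS x (comp_f_eq_zero x) rfl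
      rw [Subsingleton.elim (α := Abelian.Ext X Z i) z 0, Abelian.Ext.zero_comp]

theorem smul_id_eq_zero_of_mem_annihilator {R : Type u} [CommRing R] {N : ModuleCat.{v} R} {r : R}
    (hr : r ∈ Module.annihilator R N) : r • 𝟙 N = 0 := by
  simp [← ModuleCat.lsmul_eq_smul_id, Module.mem_annihilator_iff_lsmul_eq_zero.mp hr]

theorem one_le_extGrade_iff_subsingleton_linearMap {R : Type u} [CommRing R] [Small.{v} R]
    {N M : ModuleCat.{v} R} :
    1 ≤ extGrade N M ↔ Subsingleton (N →ₗ[R] M) :=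
  one_le_extGrade_iff.trans ModuleCat.homEquiv.subsingleton_congr

end Grade

section AssociatedPrimes

open Module

variable {R M N : Type*} [CommRing R] [IsNoetherianRing R] [AddCommGroup M] [Module R M]
  [Module.Finite R M] [AddCommGroup N] [Module R N] [Module.Finite R N]

theorem subsingleton_linearMap_iff_forall_associatedPrimes :
    Subsingleton (N →ₗ[R] M) ↔ ∀ p ∈ associatedPrimes R M, ¬ annihilator R N ≤ p := by
  have avoidance := Ideal.subset_union_prime_finite (I := annihilator R N) (f := id)
    (associatedPrimes.finite R M) ⊥ ⊥ fun _ hp _ _ ↦ IsAssociatedPrime.isPrime hp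
  simp only [id_eq, biUnion_associatedPrimes_eq_compl_regular] at avoidance
  rw [IsSMulRegular.subsingleton_linearMap_iff, ← not_iff_not]
  push Not
  exact avoidance

theorem annihilator_residueField (A : Type*) [CommRing A] [IsLocalRing A] :
    annihilator A (IsLocalRing.ResidueField A) = IsLocalRing.maximalIdeal A :=
  Ideal.annihilator_quotient

theorem subsingleton_residueField_linearMap_iff [IsLocalRing R] :
    Subsingleton (IsLocalRing.ResidueField R →ₗ[R] M) ↔
      IsLocalRing.maximalIdeal R ∉ associatedPrimes R M := by
  rw [subsingleton_linearMap_iff_forall_associatedPrimes, annihilator_residueField]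
  refine ⟨fun h hM ↦ h _ hM le_rfl, fun h p hp hle ↦ h ?_⟩
  rwa [(IsLocalRing.maximalIdeal.isMaximal R).eq_of_le (IsAssociatedPrime.isPrime hp).ne_top hle]

end AssociatedPrimes

section LocalDepth

open Module

theorem mapExtendScalars_smul_id {R A M N : Type*} [CommRing R] (S : Submonoid R)
    [CommRing A] [Algebra R A] [IsLocalization S A] [AddCommGroup M] [Module R M]
    [AddCommGroup N] [Module R N] [Module A N] [IsScalarTower R A N]
    (f : M →ₗ[R] N) [IsLocalizedModule S f] (r : R) :
    IsLocalizedModule.mapExtendScalars S f f A (r • LinearMap.id) =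
      algebraMap R A r • LinearMap.id := by
  ext x
  simp [IsLocalizedModule.map_id]

variable {R : Type u} [CommRing R]

theorem localizedModuleFunctor_map_smul_id (S : Submonoid R) (M : ModuleCat.{u} R) (r : R) :
    (ModuleCat.localizedModuleFunctor S).map (r • 𝟙 M) =
      algebraMap R (Localization S) r • 𝟙 (M.localizedModule S) :=
  ModuleCat.hom_ext (mapExtendScalars_smul_id S (M.localizedModuleMkLinearMap S) r)

/-- The depth of the localization `Mₚ` over the local ring `Rₚ`, as the grade of the residue field
of `p` on `Mₚ`. -/
noncomputable def localDepth (M : ModuleCat.{u} R) (p : PrimeSpectrum R) : ℕ∞ :=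
  extGrade (ModuleCat.of (Localization.AtPrime p.asIdeal) p.asIdeal.ResidueField)
    (M.localizedModule p.asIdeal.primeCompl)

theorem natCast_add_one_le_localDepth_iff {M : ModuleCat.{u} R} {p : PrimeSpectrum R} {r : R}
    (hrp : r ∈ p.asIdeal) (hreg : IsSMulRegular M r) (n : ℕ) :
    ((n + 1 : ℕ) : ℕ∞) ≤ localDepth M p ↔
      (n : ℕ∞) ≤ localDepth (M.smulShortComplex r).X₃ p := by
  have hr : algebraMap R (Localization.AtPrime p.asIdeal) r ∈
      Module.annihilator (Localization.AtPrime p.asIdeal) p.asIdeal.ResidueField := by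
    rwa [annihilator_residueField, IsLocalization.AtPrime.to_map_mem_maximal_iff _ p.asIdeal]
  have hS := hreg.smulShortComplex_shortExact.map_of_exact
    (ModuleCat.localizedModuleFunctor p.asIdeal.primeCompl)
  exact natCast_add_one_le_extGrade_iff (R := Localization.AtPrime p.asIdeal)
    (smul_id_eq_zero_of_mem_annihilator hr)
    (localizedModuleFunctor_map_smul_id p.asIdeal.primeCompl M r) hS n

variable [IsNoetherianRing R]

theorem one_le_localDepth_iff {M : ModuleCat.{u} R} [Module.Finite R M] {p : PrimeSpectrum R} :
    1 ≤ localDepth M p ↔ p.asIdeal ∉ associatedPrimes R M := by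
  have : Module.Finite (Localization.AtPrime p.asIdeal)
      (M.localizedModule p.asIdeal.primeCompl) :=
    Module.Finite.of_isLocalizedModule p.asIdeal.primeCompl
      (M.localizedModuleMkLinearMap p.asIdeal.primeCompl)
  rw [localDepth, one_le_extGrade_iff_subsingleton_linearMap,
    subsingleton_residueField_linearMap_iff,
    ← associatedPrimes.preimage_comap_associatedPrimes_eq_associatedPrimes_of_isLocalizedModule
      p.asIdeal.primeCompl _ (M.localizedModuleMkLinearMap p.asIdeal.primeCompl),
    Set.mem_preimage, ← Ideal.under_def, Localization.AtPrime.under_maximalIdeal]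

variable (N M : ModuleCat.{u} R) [Module.Finite R N] [Module.Finite R M]

theorem one_le_extGrade_iff_forall_support :
    1 ≤ extGrade N M ↔ ∀ p ∈ Module.support R N, 1 ≤ localDepth M p := by
  rw [one_le_extGrade_iff_subsingleton_linearMap,
    subsingleton_linearMap_iff_forall_associatedPrimes]
  simp only [Module.mem_support_iff_of_finite, one_le_localDepth_iff]
  exact ⟨fun h p hle hp ↦ h _ hp hle,
    fun h p hp hle ↦ h ⟨p, IsAssociatedPrime.isPrime hp⟩ hle hp⟩

theorem natCast_le_extGrade_iff_forall_support (n : ℕ) :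
    (n : ℕ∞) ≤ extGrade N M ↔ ∀ p ∈ Module.support R N, (n : ℕ∞) ≤ localDepth M p := by
  induction n generalizing M with
  | zero => simp
  | succ n ih =>
    have finite_X₃ (r : R) : Module.Finite R (M.smulShortComplex r).X₃ :=
      inferInstanceAs (Module.Finite R (QuotSMulTop r M))
    have one_le : (1 : ℕ∞) ≤ (n + 1 : ℕ) := by simp
    by_cases h : 1 ≤ extGrade N M
    · obtain ⟨r, hr, hreg⟩ := IsSMulRegular.subsingleton_linearMap_iff.1
        (one_le_extGrade_iff_subsingleton_linearMap.1 h)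
      calc ((n + 1 : ℕ) : ℕ∞) ≤ extGrade N M
        _ ↔ (n : ℕ∞) ≤ extGrade N (M.smulShortComplex r).X₃ :=
          natCast_add_one_le_extGrade_iff (R := R) (Y := M) (smul_id_eq_zero_of_mem_annihilator hr)
            (ModuleCat.smulShortComplex_f_eq_smul_id M r) hreg.smulShortComplex_shortExact n
        _ ↔ ∀ p ∈ Module.support R N, (n : ℕ∞) ≤ localDepth (M.smulShortComplex r).X₃ p :=
          ih _
        _ ↔ ∀ p ∈ Module.support R N, ((n + 1 : ℕ) : ℕ∞) ≤ localDepth M p :=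
          forall₂_congr fun p hp ↦ (natCast_add_one_le_localDepth_iff
            (Module.mem_support_iff_of_finite.1 hp hr) hreg n).symm
    · exact iff_of_false (fun hn ↦ h (one_le.trans hn)) fun hn ↦
        h ((one_le_extGrade_iff_forall_support N M).2 fun p hp ↦ one_le.trans (hn p hp))

theorem extGrade_eq_iInf_localDepth :
    extGrade N M = ⨅ p ∈ Module.support R N, localDepth M p :=
  ENat.eq_of_forall_natCast_le_iff fun n ↦ by
    simp only [le_iInf_iff, natCast_le_extGrade_iff_forall_support]

end LocalDepth

section DepthOf

open IsLocalRing

theorem extGrade_residueField_le_supportDim {A : Type u} [CommRing A] [IsNoetherianRing A]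
    [IsLocalRing A] (M : ModuleCat.{u} A) [Module.Finite A M] [Nontrivial M] :
    (extGrade (ModuleCat.of A (ResidueField A)) M : WithBot ℕ∞) ≤ Module.supportDim A M := by
  obtain ⟨d, hd⟩ := WithBot.ne_bot_iff_exists.1 (Module.supportDim_ne_bot_of_nontrivial A M)
  rw [← hd, WithBot.coe_le_coe]
  refine ENat.forall_natCast_le_iff_le.1 fun n hn ↦ ?_
  have smul_top_lt : maximalIdeal A • (⊤ : Submodule A M) < ⊤ :=
    (Submodule.top_ne_ideal_smul_of_le_jacobson_annihilator
      (maximalIdeal_le_jacobson _)).symm.lt_top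
  have support_eq : Module.support A (ResidueField A) =
      PrimeSpectrum.zeroLocus (maximalIdeal A) := by
    rw [Module.support_eq_zeroLocus, annihilator_residueField]
  obtain ⟨rs, rfl, -, hrs⟩ := ModuleCat.exists_isRegular_of_exists_subsingleton_ext
    (maximalIdeal A) n M smul_top_lt (ModuleCat.of A (ResidueField A)) support_eq
    (natCast_le_extGrade_iff.1 hn)
  have : Nontrivial (M ⧸ Ideal.ofList rs • (⊤ : Submodule A M)) :=
    Submodule.Quotient.nontrivial_iff.2 hrs.top_ne_smul.symm
  have := (Module.nonempty_support_of_nontrivial (R := A)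
    (M := M ⧸ Ideal.ofList rs • (⊤ : Submodule A M))).to_subtype
  rw [← WithBot.coe_le_coe, hd]
  calc ((rs.length : ℕ∞) : WithBot ℕ∞)
    _ ≤ Module.supportDim A (M ⧸ Ideal.ofList rs • (⊤ : Submodule A M)) + rs.length :=
      le_add_of_nonneg_left Order.krullDim_nonneg
    _ = Module.supportDim A M := Module.supportDim_add_length_eq_supportDim_of_isRegular rs hrs

theorem extGrade_residueField_ne_top (A : Type u) [CommRing A] [IsNoetherianRing A]
    [IsLocalRing A] : extGrade (ModuleCat.of A (ResidueField A)) (ModuleCat.of A A) ≠ ⊤ := by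
  intro h
  have := extGrade_residueField_le_supportDim (ModuleCat.of A A)
  rw [h, Module.supportDim_self_eq_ringKrullDim] at this
  exact ringKrullDim_ne_top (top_le_iff.1 this)

theorem coe_depthOf (A : Type) [CommRing A] [IsNoetherianRing A] [IsLocalRing A] :
    (depthOf A : ℕ∞) = extGrade (ModuleCat.of A (ResidueField A)) (ModuleCat.of A A) := by
  have nontrivial_iff (i : ℕ) : Nontrivial (extGroup A i (ResidueField A) A) ↔
      Nontrivial (Abelian.Ext (ModuleCat.of A (ResidueField A)) (ModuleCat.of A A) i) := by
    simp only [← not_subsingleton_iff_nontrivial, subsingleton_extGroup_iff]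
  have nonempty : {i | Nontrivial (extGroup A i (ResidueField A) A)}.Nonempty := by
    by_contra! h
    refine extGrade_residueField_ne_top A ?_
    simp_rw [extGrade, ← nontrivial_iff]
    simpa [Set.eq_empty_iff_forall_notMem] using h
  rw [depthOf, ENat.natCast_sInf nonempty]
  simp only [Set.mem_ofPred_eq, nontrivial_iff, extGrade]

theorem localDepth_eq_extGrade {R : Type u} [CommRing R] {M : ModuleCat.{u} R}
    {p : PrimeSpectrum R} {N : Type u} [AddCommGroup N] [Module R N]
    [Module (Localization.AtPrime p.asIdeal) N]
    [IsScalarTower R (Localization.AtPrime p.asIdeal) N]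
    (g : M →ₗ[R] N) [IsLocalizedModule p.asIdeal.primeCompl g] :
    localDepth M p = extGrade (ModuleCat.of (Localization.AtPrime p.asIdeal) p.asIdeal.ResidueField)
      (ModuleCat.of (Localization.AtPrime p.asIdeal) N) := by
  let S := p.asIdeal.primeCompl
  let e := (IsLocalizedModule.linearEquiv S
    (M.localizedModuleMkLinearMap S) g).extendScalarsOfIsLocalization S (Localization S)
  exact extGrade_congr_right _ e.toModuleIso

theorem coe_depthOf_atPrime {R : Type} [CommRing R] [IsNoetherianRing R] (p : PrimeSpectrum R) :
    (depthOf (Localization.AtPrime p.asIdeal) : ℕ∞) = localDepth (ModuleCat.of R R) p :=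
  (coe_depthOf _).trans (localDepth_eq_extGrade (M := ModuleCat.of R R)
    (Algebra.linearMap R (Localization.AtPrime p.asIdeal))).symm

end DepthOf

section Dual

open Module

variable {R M N : Type*} [CommRing R] [AddCommGroup M] [Module R M] [AddCommGroup N] [Module R N]

theorem subsingleton_dual_quotient_range_iff (g : M →ₗ[R] N) :
    Subsingleton (Dual R (N ⧸ LinearMap.range g)) ↔ Function.Injective g.dualMap := by
  rw [(LinearMap.range g).dualQuotEquivDualAnnihilator.toEquiv.subsingleton_congr,
    ← LinearMap.ker_dualMap_eq_dualAnnihilator_range, ← LinearMap.ker_eq_bot,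
    Submodule.subsingleton_iff_eq_bot]

theorem injective_dualMap_dualMap [IsReflexive R M] [Projective R N] {g : M →ₗ[R] N}
    (hg : Function.Injective g) : Function.Injective g.dualMap.dualMap := by
  rw [← Dual.eval_comp_comp_evalEquiv_eq]
  exact (eval_apply_injective R).comp (hg.comp (evalEquiv R M).symm.injective)

end Dual

theorem k_torsion_free_iff_depth_general {R : Type} [CommRing R] [IsNoetherianRing R]
    {F₁ F₀ : Type} [AddCommGroup F₁] [Module R F₁] [Module.Finite R F₁] [Module.IsReflexive R F₁]
    [AddCommGroup F₀] [Module R F₀] [Module.Projective R F₀] {φ : F₁ →ₗ[R] F₀}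
    (hφ : Function.Injective φ) (k : ℕ) :
    (∀ i, 1 ≤ i → i ≤ k →
      Subsingleton (extGroup R i (Module.Dual R F₁ ⧸ LinearMap.range φ.dualMap) R)) ↔
    (∀ (𝔭 : Ideal R) [𝔭.IsPrime],
      Nontrivial (LocalizedModule 𝔭.primeCompl (Module.Dual R F₁ ⧸ LinearMap.range φ.dualMap)) →
      k + 1 ≤ depthOf (Localization.AtPrime 𝔭)) := by
  let D := ModuleCat.of R (Module.Dual R F₁ ⧸ LinearMap.range φ.dualMap)
  have one_le_extGrade : 1 ≤ extGrade D (ModuleCat.of R R) :=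
    one_le_extGrade_iff_subsingleton_linearMap.2
      ((subsingleton_dual_quotient_range_iff _).2 (injective_dualMap_dualMap hφ))
  have subsingleton_ext_zero : Subsingleton (Abelian.Ext D (ModuleCat.of R R) 0) :=
    natCast_le_extGrade_iff.1 one_le_extGrade 0 Nat.one_pos
  calc
    _ ↔ ((k + 1 : ℕ) : ℕ∞) ≤ extGrade D (ModuleCat.of R R) := by
      simp only [natCast_le_extGrade_iff, subsingleton_extGroup_iff]
      constructor
      · rintro h (_ | i) hi
        exacts [subsingleton_ext_zero, h (i + 1) (by lia) (by lia)]
      · exact fun h i _ hi ↦ h i (by lia)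
    _ ↔ ∀ p ∈ Module.support R D, ((k + 1 : ℕ) : ℕ∞) ≤ localDepth (ModuleCat.of R R) p := by
      simp only [extGrade_eq_iInf_localDepth, le_iInf_iff]
    _ ↔ _ := by
      simp only [← coe_depthOf_atPrime, Nat.cast_le, Module.mem_support_iff]
      exact ⟨fun h 𝔭 _ ↦ h ⟨𝔭, ‹_›⟩, fun h p ↦ h p.asIdeal⟩

/-- Let `R` be a Noetherian local ring whose total quotient ring is semisimple
and `M` a finite `R`-module with a finite free resolution `0 → F₁ →φ F₀ → M → 0`.
For `k ≥ 1`, `M` is `k`-torsion free (i.e. `Ext^i_R(D(M), R) = 0` for `1 ≤ i ≤ k`, where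
`D(M) = Coker(φ*)`) iff `depth(R_𝔭) ≥ k + 1` for every prime `𝔭` in the support of `D(M)`. -/
theorem k_torsion_free_iff_depth
    (R : Type) [CommRing R] [IsNoetherianRing R] [IsLocalRing R]
    [IsSemisimpleRing (Localization (nonZeroDivisors R))]
    (M : Type) [AddCommGroup M] [Module R M] [Module.Finite R M]
    (n₁ n₀ : ℕ) (φ : (Fin n₁ → R) →ₗ[R] (Fin n₀ → R)) (π : (Fin n₀ → R) →ₗ[R] M)
    (hinj : Function.Injective φ) (hex : Function.Exact φ π)
    (hsurj : Function.Surjective π)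
    (k : ℕ) (hk : 1 ≤ k) :
    (∀ i, 1 ≤ i → i ≤ k →
      Subsingleton (extGroup R i
        (Module.Dual R (Fin n₁ → R) ⧸ LinearMap.range φ.dualMap) R)) ↔
    (∀ (𝔭 : Ideal R) [𝔭.IsPrime],
      Nontrivial (LocalizedModule 𝔭.primeCompl
        (Module.Dual R (Fin n₁ → R) ⧸ LinearMap.range φ.dualMap)) →
      k + 1 ≤ depthOf (Localization.AtPrime 𝔭)) :=
  k_torsion_free_iff_depth_general hinj k
end

section
/- Let R be a finite-dimensional Noetherian local ring and 𝔭 a prime ideal of R. Then height(𝔭) ≥ depth(R) − dim(R/𝔭). -/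
open CategoryTheory

/-!
Write `d = dim (R ⧸ 𝔭)`. Ischebeck's theorem: if `Extⁱ(k, M) = 0` for all `i < n`, where `k` is the
residue field, then `Extⁱ(R ⧸ 𝔭, M) = 0` for all `i < n - d`. It goes by induction on `d`: if
`x ∉ 𝔭` is in the maximal ideal, the support of `R ⧸ (𝔭 + xR)` consists of primes of smaller
dimension, so `Extⁱ⁺¹(R ⧸ (𝔭 + xR), M) = 0` by prime filtration, hence multiplication by `x` is
surjective on `Extⁱ(R ⧸ 𝔭, M)` and Nakayama's lemma applies. By Rees' theorem, `𝔭` then contains an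
`M`-regular sequence of length `n - d`. It remains regular on `M_𝔭`, whose dimension is therefore at
least `n - d`.
-/

open IsLocalRing Pointwise

universe w v u

section ProjectiveResolution

variable {R : Type*} [Ring R] {C : Type u} [Category.{v} C] [Abelian C] [Linear R C]
  [EnoughProjectives C] {X Y : C} {n : ℕ}

-- For `n = 0` the truncated `n - 1` is `0`, and `d 0 0 = 0`: a degree-zero cocycle vanishes.
lemma exists_d_comp_eq_of_subsingleton_ext (P : ProjectiveResolution X)
    (h : Subsingleton (((Ext R C n).obj (Opposite.op X)).obj Y)) (f : P.complex.X n ⟶ Y)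
    (hf : P.complex.d (n + 1) n ≫ f = 0) :
    ∃ g : P.complex.X (n - 1) ⟶ Y, P.complex.d n (n - 1) ≫ g = f := by
  have hzero : Limits.IsZero ((P.complex.linearYonedaObj R Y).homology n) :=
    (ModuleCat.isZero_of_subsingleton _).of_iso (P.isoExt n Y).symm
  rw [← HomologicalComplex.exactAt_iff_isZero_homology,
    HomologicalComplex.exactAt_iff' _ (n - 1) n (n + 1) (by cases n <;> simp) (by simp),
    ShortComplex.moduleCat_exact_iff] at hzero
  exact hzero f hf

variable [HasExt.{w} C]

lemma subsingleton_abelianExt_of_subsingleton_ext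
    (h : Subsingleton (((Ext R C n).obj (Opposite.op X)).obj Y)) :
    Subsingleton (Abelian.Ext.{w} X Y n) := by
  let P := projectiveResolution X
  refine subsingleton_of_forall_eq 0 fun α ↦ ?_
  obtain ⟨f, hf, rfl⟩ := P.extMk_surjective α (n + 1) rfl
  obtain ⟨g, hg⟩ := exists_d_comp_eq_of_subsingleton_ext P h f hf
  cases n with
  | zero =>
    obtain rfl : f = 0 := by rw [← hg, P.complex.shape _ _ (by simp), Limits.zero_comp]
    exact P.extMk_zero _ _
  | succ k => exact (P.extMk_eq_zero_iff f _ rfl hf k rfl).2 ⟨g, hg⟩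

end ProjectiveResolution

section ExtVanishing

variable {C : Type u} [Category.{v} C] [Abelian C] [HasExt.{w} C]

lemma subsingleton_abelianExt_of_shortExact {S : ShortComplex C} (hS : S.ShortExact) {Y : C} {n : ℕ}
    (h₁ : Subsingleton (Abelian.Ext S.X₁ Y n)) (h₃ : Subsingleton (Abelian.Ext S.X₃ Y n)) :
    Subsingleton (Abelian.Ext S.X₂ Y n) := by
  refine subsingleton_of_forall_eq 0 fun α ↦ ?_
  obtain ⟨β, rfl⟩ := Abelian.Ext.contravariant_sequence_exact₂ hS Y α (h₁.elim _ _)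
  rw [h₃.elim β 0, Abelian.Ext.comp_zero]

lemma subsingleton_abelianExt_of_iso {X X' Y : C} (e : X ≅ X') {n : ℕ}
    (h : Subsingleton (Abelian.Ext X' Y n)) : Subsingleton (Abelian.Ext X Y n) := by
  refine subsingleton_of_forall_eq 0 fun α ↦ ?_
  calc α = (Abelian.Ext.mk₀ e.hom).comp ((Abelian.Ext.mk₀ e.inv).comp α (zero_add n))
          (zero_add n) := by simp
    _ = 0 := by rw [h.elim (Abelian.Ext.comp _ α _) 0, Abelian.Ext.comp_zero]

lemma subsingleton_abelianExt_of_isZero {X Y : C} (hX : Limits.IsZero X) (n : ℕ) :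
    Subsingleton (Abelian.Ext X Y n) := by
  refine subsingleton_of_forall_eq 0 fun α ↦ ?_
  rw [← Abelian.Ext.mk₀_id_comp α, hX.eq_of_src (𝟙 X) 0, Abelian.Ext.mk₀_zero,
    Abelian.Ext.zero_comp]

lemma mk₀_smul_id_comp {R : Type*} [CommRing R] [Linear R C] (r : R) {X Y : C} {n : ℕ}
    (α : Abelian.Ext X Y n) : (Abelian.Ext.mk₀ (r • 𝟙 X)).comp α (zero_add n) = r • α := by
  rw [Abelian.Ext.mk₀_smul, Abelian.Ext.smul_comp, Abelian.Ext.mk₀_id_comp]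

end ExtVanishing

section Module

variable {R : Type u} [CommRing R] [IsNoetherianRing R] {M N : Type u} [AddCommGroup M] [Module R M]
  [AddCommGroup N] [Module R N] [Module.Finite R N] {i : ℕ}

lemma subsingleton_abelianExt_of_forall_mem_support
    (h : ∀ p ∈ Module.support R N,
      Subsingleton (Abelian.Ext (ModuleCat.of R (R ⧸ p.asIdeal)) (ModuleCat.of R M) i)) :
    Subsingleton (Abelian.Ext (ModuleCat.of R N) (ModuleCat.of R M) i) := by
  induction ‹Module.Finite R N› using
    IsNoetherianRing.induction_on_isQuotientEquivQuotientPrime R with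
  | subsingleton N =>
    exact subsingleton_abelianExt_of_isZero (ModuleCat.isZero_of_subsingleton _) i
  | quotient N p e =>
    refine subsingleton_abelianExt_of_iso e.toModuleIso (h p ?_)
    rw [e.support_eq, Module.support_eq_zeroLocus, Ideal.annihilator_quotient]
    exact subset_refl (p.asIdeal : Set R)
  | exact N₁ N₂ N₃ f g hf hg hfg ih₁ ih₃ =>
    rw [Module.support_of_exact hfg hf hg] at h
    exact subsingleton_abelianExt_of_shortExact
      (ModuleCat.shortComplex_shortExact
        (ModuleCat.shortComplexOfCompEqZero f g hfg.linearMap_comp_eq_zero) hfg hf hg)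
      (ih₁ fun p hp ↦ h p (.inl hp)) (ih₃ fun p hp ↦ h p (.inr hp))

variable [Module.Finite R M]

lemma subsingleton_abelianExt_of_quotSMulTop {x : R} (hx : x ∈ (⊥ : Ideal R).jacobson)
    (hreg : IsSMulRegular N x)
    (h : Subsingleton
      (Abelian.Ext (ModuleCat.of R (QuotSMulTop x N)) (ModuleCat.of R M) (i + 1))) :
    Subsingleton (Abelian.Ext (ModuleCat.of R N) (ModuleCat.of R M) i) := by
  have hS := IsSMulRegular.smulShortComplex_shortExact (M := ModuleCat.of R N) hreg
  have htop : x • (⊤ : Submodule R (Abelian.Ext (ModuleCat.of R N) (ModuleCat.of R M) i)) = ⊤ := by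
    refine top_le_iff.1 fun α _ ↦ ?_
    obtain ⟨β, hβ⟩ :=
      Abelian.Ext.contravariant_sequence_exact₁ hS _ α (Nat.add_comm 1 i) (h.elim _ _)
    rw [← (mk₀_smul_id_comp x β).symm.trans hβ]
    exact Submodule.smul_mem_pointwise_smul _ _ _ trivial
  by_contra! hnontrivial
  exact Submodule.top_ne_pointwise_smul_of_mem_jacobson_annihilator
    (Ideal.jacobson_mono bot_le hx) htop.symm

variable [IsLocalRing R] {n : ℕ}

theorem subsingleton_abelianExt_quotient_of_lt_sub_coheight
    (h : ∀ i < n,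
      Subsingleton (Abelian.Ext (ModuleCat.of R (ResidueField R)) (ModuleCat.of R M) i))
    (p : PrimeSpectrum R) (hi : i < n - Order.coheight p) :
    Subsingleton (Abelian.Ext (ModuleCat.of R (R ⧸ p.asIdeal)) (ModuleCat.of R M) i) := by
  have : WellFoundedGT (PrimeSpectrum R) :=
    StrictMono.wellFoundedGT (f := PrimeSpectrum.asIdeal) fun _ _ ↦ id
  induction p using WellFoundedGT.induction generalizing i with
  | ind p ih =>
  by_cases hmax : maximalIdeal R ≤ p.asIdeal
  · rw [← (maximalIdeal.isMaximal R).eq_of_le p.isPrime.ne_top hmax]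
    exact h i (by exact_mod_cast hi.trans_le tsub_le_self)
  · obtain ⟨x, hx, hxp⟩ := SetLike.not_le_iff_exists.1 hmax
    have hreg : IsSMulRegular (R ⧸ p.asIdeal) x :=
      (isSMulRegular_quotient_iff_mem_of_smul_mem _ _).2 fun y hxy ↦
        (p.isPrime.mem_or_mem hxy).resolve_left hxp
    refine subsingleton_abelianExt_of_quotSMulTop (maximalIdeal_le_jacobson _ hx) hreg <|
      subsingleton_abelianExt_of_forall_mem_support fun q hq ↦ ?_
    have hpq : p < q := by
      rw [Module.support_quotSMulTop, Module.support_eq_zeroLocus, Ideal.annihilator_quotient] at hq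
      exact lt_of_le_of_ne hq.1 fun hpq ↦ hxp (hpq ▸ hq.2 rfl)
    refine ih q hpq (lt_tsub_iff_right.2 ?_)
    calc ((i + 1 : ℕ) : ℕ∞) + Order.coheight q = i + (Order.coheight q + 1) := by
          push_cast
          ring
      _ ≤ i + Order.coheight p := by gcongr; exact Order.coheight_add_one_le hpq
      _ < n := lt_tsub_iff_right.1 hi

theorem exists_isRegular_length_eq_sub_coheight [Nontrivial M]
    (h : ∀ i < n,
      Subsingleton (Abelian.Ext (ModuleCat.of R (ResidueField R)) (ModuleCat.of R M) i))
    (p : PrimeSpectrum R) :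
    ∃ rs : List R, rs.length = n - Order.coheight p ∧ (∀ r ∈ rs, r ∈ p.asIdeal) ∧
      RingTheory.Sequence.IsRegular M rs := by
  obtain ⟨k, hk⟩ : ∃ k : ℕ, (k : ℕ∞) = n - Order.coheight p :=
    ENat.ne_top_iff_exists.1 (tsub_le_self.trans_lt (ENat.natCast_lt_top n)).ne
  have hlt : p.asIdeal • (⊤ : Submodule R M) < ⊤ :=
    (Submodule.top_ne_ideal_smul_of_le_jacobson_annihilator
      ((le_maximalIdeal p.isPrime.ne_top).trans (maximalIdeal_le_jacobson _))).symm.lt_top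
  have hsupp : Module.support R (R ⧸ p.asIdeal) = PrimeSpectrum.zeroLocus p.asIdeal := by
    rw [Module.support_eq_zeroLocus, Ideal.annihilator_quotient]
  obtain ⟨rs, hlen, hmem, hreg⟩ := ModuleCat.exists_isRegular_of_exists_subsingleton_ext p.asIdeal k
    (ModuleCat.of R M) hlt (ModuleCat.of R (R ⧸ p.asIdeal)) hsupp fun i hi ↦
      subsingleton_abelianExt_quotient_of_lt_sub_coheight h p (hk ▸ Nat.cast_lt.2 hi)
  exact ⟨rs, by rw [hlen, hk], hmem, hreg⟩

end Module

section Dimension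

variable {R : Type*} [CommRing R]

lemma ringKrullDim_quotient_eq_coheight (p : PrimeSpectrum R) :
    ringKrullDim (R ⧸ p.asIdeal) = Order.coheight p := by
  rw [ringKrullDim_quotient, Order.coheight_eq_krullDim_Ici]
  rfl

variable {M : Type*} [AddCommGroup M] [Module R M] {rs : List R}

lemma length_le_supportDim_of_isRegular [IsNoetherianRing R] [IsLocalRing R] [Module.Finite R M]
    (hreg : RingTheory.Sequence.IsRegular M rs) : rs.length ≤ Module.supportDim R M := by
  have : Nontrivial (M ⧸ Ideal.ofList rs • (⊤ : Submodule R M)) :=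
    Submodule.Quotient.nontrivial_iff.2 hreg.top_ne_smul.symm
  have : Nonempty (Module.support R (M ⧸ Ideal.ofList rs • (⊤ : Submodule R M))) :=
    Module.nonempty_support_of_nontrivial.to_subtype
  rw [← Module.supportDim_add_length_eq_supportDim_of_isRegular rs hreg]
  exact le_add_of_nonneg_left Order.krullDim_nonneg

lemma length_le_supportDim_localization_of_isWeaklyRegular (p : Ideal R) [p.IsPrime] (Rₚ : Type*)
    [CommRing Rₚ] [IsNoetherianRing Rₚ] [Algebra R Rₚ] [IsLocalization.AtPrime Rₚ p]
    {N : Type*} [AddCommGroup N] [Module R N] [Module Rₚ N] [IsScalarTower R Rₚ N] [Nontrivial N]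
    [Module.Finite Rₚ N] (f : M →ₗ[R] N) [IsLocalizedModule.AtPrime p f]
    (hreg : RingTheory.Sequence.IsWeaklyRegular M rs) (hmem : ∀ r ∈ rs, r ∈ p) :
    rs.length ≤ Module.supportDim Rₚ N := by
  have : IsLocalRing Rₚ := IsLocalization.AtPrime.isLocalRing Rₚ p
  simpa only [List.length_map] using length_le_supportDim_of_isRegular
    (hreg.isRegular_of_isLocalizedModule_of_mem Rₚ p f hmem)

end Dimension

theorem height_ge_depth_sub_dim_quot_general {R : Type u} [CommRing R] [IsNoetherianRing R]
    [IsLocalRing R] {M : Type u} [AddCommGroup M] [Module R M] [Module.Finite R M]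
    (p : Ideal R) [p.IsPrime] (Rₚ : Type*) [CommRing Rₚ] [Algebra R Rₚ]
    [IsLocalization.AtPrime Rₚ p] {N : Type*} [AddCommGroup N] [Module R N] [Module Rₚ N]
    [IsScalarTower R Rₚ N] [Nontrivial N] (f : M →ₗ[R] N) [IsLocalizedModule.AtPrime p f] {n : ℕ}
    (h : ∀ i < n,
      Subsingleton (Abelian.Ext (ModuleCat.of R (ResidueField R)) (ModuleCat.of R M) i)) :
    (n : WithBot ℕ∞) ≤ Module.supportDim Rₚ N + ringKrullDim (R ⧸ p) := by
  have : IsNoetherianRing Rₚ := IsLocalization.isNoetherianRing p.primeCompl Rₚ ‹_›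
  have : Module.Finite Rₚ N := .of_isLocalizedModule p.primeCompl (Rₚ := Rₚ) f
  have : Nontrivial M := by
    by_contra! hM
    exact not_subsingleton N (IsLocalizedModule.subsingleton_of_subsingleton p.primeCompl f)
  let P : PrimeSpectrum R := ⟨p, ‹_›⟩
  obtain ⟨rs, hlen, hmem, hreg⟩ := exists_isRegular_length_eq_sub_coheight h P
  calc (n : WithBot ℕ∞) ≤ (rs.length + Order.coheight P : ℕ∞) :=
        WithBot.coe_le_coe.2 (hlen ▸ le_tsub_add)
    _ = rs.length + ringKrullDim (R ⧸ p) := by rw [ringKrullDim_quotient_eq_coheight P]; rfl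
    _ ≤ Module.supportDim Rₚ N + ringKrullDim (R ⧸ p) := by
      gcongr
      exact length_le_supportDim_localization_of_isWeaklyRegular p Rₚ f hreg.1 hmem

/-- For a finite-dimensional Noetherian local ring `R` and a prime `𝔭`,
`height 𝔭 ≥ depth R − dim (R/𝔭)`, stated as `depth R ≤ height 𝔭 + dim (R/𝔭)`,
where `height 𝔭 = dim R_𝔭`. -/
theorem height_ge_depth_sub_dim_quot
    (R : Type) [CommRing R] [IsNoetherianRing R] [IsLocalRing R]
    (hfin : ringKrullDim R < ⊤)
    (𝔭 : Ideal R) [𝔭.IsPrime] :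
    ((depthOf R : ℕ) : WithBot (WithTop ℕ)) ≤
      ringKrullDim (Localization.AtPrime 𝔭) + ringKrullDim (R ⧸ 𝔭) := by
  rw [← Module.supportDim_self_eq_ringKrullDim (R := Localization.AtPrime 𝔭)]
  exact height_ge_depth_sub_dim_quot_general 𝔭 _ (Algebra.linearMap R (Localization.AtPrime 𝔭))
    fun i hi ↦ subsingleton_abelianExt_of_subsingleton_ext <|
      not_nontrivial_iff_subsingleton.1 (Nat.notMem_of_lt_sInf hi)
end

section
/- Let R be a commutative Noetherian ring and M a finite R-module with presentation P₁ →^φ P₀ → M → 0 by finite free modules, and let D(M) = Coker(φ*). Then there is an exact sequence 0 → Ext^1_R(D(M), R) → M →^f M** → Ext^2_R(D(M), R) → 0, where f is the canonical evaluation map into the bidual. -/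
open CategoryTheory

/-!
Put `K = range φ*`. The exact sequences `0 → K → P₁* → D(M) → 0` and `0 → M* → P₀* → K → 0` have
projective middle terms, so dimension shifting gives `Ext¹(D(M), R) ≅ Coker(P₁** → K*)` and
`Ext²(D(M), R) ≅ Ext¹(K, R) ≅ Coker(P₀** → M**)`. Since `P₀` is reflexive and maps onto `M`, the
second cokernel is that of `M → M**`. For the first, `K*` is the kernel of `P₀** → M**`, that is,
the preimage in `P₀` of the kernel of `M → M**`, and the image of `P₁**` in it is
`range φ = ker π`.
-/

section Abelian

open Limits

variable {C : Type*} [Category* C] [Abelian C]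

section Splice

variable {Z X : C} (P : ProjectiveResolution Z) (f : Z ⟶ X)

/-- The augmentation `P₀ ⟶ Z` of a projective resolution, as a morphism to `Z` itself: the target
of `P.π.f 0` is the degree zero term of a single complex, which is `Z` only after unfolding. -/
noncomputable def resolutionAugmentation : P.complex.X 0 ⟶ Z :=
  P.π.f 0

instance epi_resolutionAugmentation : Epi (resolutionAugmentation P) :=
  inferInstanceAs (Epi (P.π.f 0))

lemma d_comp_resolutionAugmentation : P.complex.d 1 0 ≫ resolutionAugmentation P = 0 :=
  P.complex_d_comp_π_f_zero

lemma exact_d_resolutionAugmentation :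
    (ShortComplex.mk _ _ (d_comp_resolutionAugmentation P)).Exact :=
  P.exact₀

lemma d_comp_resolutionAugmentation_comp :
    P.complex.d 1 0 ≫ resolutionAugmentation P ≫ f = 0 := by
  rw [← Category.assoc, d_comp_resolutionAugmentation, zero_comp]

lemma exact_d_resolutionAugmentation_comp [Mono f] :
    (ShortComplex.mk _ _ (d_comp_resolutionAugmentation_comp P f)).Exact := by
  let α : ShortComplex.mk _ _ (d_comp_resolutionAugmentation P) ⟶
      ShortComplex.mk _ _ (d_comp_resolutionAugmentation_comp P f) :=
    { τ₁ := 𝟙 _, τ₂ := 𝟙 _, τ₃ := f }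
  exact (ShortComplex.exact_iff_of_epi_of_isIso_of_mono α).1 (exact_d_resolutionAugmentation P)

/-- The complex `⋯ ⟶ P₁ ⟶ P₀ ⟶ X` obtained by splicing a projective resolution of `Z` with a
morphism `f : Z ⟶ X`; the object `X` sits in degree zero. -/
noncomputable def spliceComplex : ChainComplex C ℕ :=
  P.complex.augment (resolutionAugmentation P ≫ f) (d_comp_resolutionAugmentation_comp P f)

lemma spliceComplex_exactAt_succ [Mono f] (n : ℕ) : (spliceComplex P f).ExactAt (n + 1) := by
  rw [HomologicalComplex.exactAt_iff' _ (n + 2) (n + 1) n (by simp) (by simp)]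
  cases n with
  | zero => exact exact_d_resolutionAugmentation_comp P f
  | succ n => exact P.exact_succ n

end Splice

variable {S : ShortComplex C}

lemma resolutionAugmentation_comp_comp (P : ProjectiveResolution S.X₁) :
    (resolutionAugmentation P ≫ S.f) ≫ S.g = 0 := by
  rw [Category.assoc, S.zero, comp_zero]

lemma exact_resolutionAugmentation_comp (hS : S.Exact) (P : ProjectiveResolution S.X₁) :
    (ShortComplex.mk _ _ (resolutionAugmentation_comp_comp P)).Exact := by
  let α : ShortComplex.mk _ _ (resolutionAugmentation_comp_comp P) ⟶ S :=
    { τ₁ := resolutionAugmentation P, τ₂ := 𝟙 _, τ₃ := 𝟙 _ }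
  exact (ShortComplex.exact_iff_of_epi_of_isIso_of_mono α).2 hS

lemma quasiIso_toSingle₀_of_exact {K : ChainComplex C ℕ} {Z : C} (p : K.X 0 ⟶ Z)
    (w : K.d 1 0 ≫ p = 0) (hexact : (ShortComplex.mk _ _ w).Exact) (hepi : Epi p)
    (hK : ∀ n, K.ExactAt (n + 1)) : QuasiIso ((K.toSingle₀Equiv Z).symm ⟨p, w⟩) where
  quasiIsoAt n := by
    cases n with
    | zero =>
      rw [ChainComplex.quasiIsoAt₀_iff, ShortComplex.quasiIso_iff_of_zeros']
      · have hp : ((K.toSingle₀Equiv Z).symm ⟨p, w⟩).f 0 = p :=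
          ChainComplex.toSingle₀Equiv_symm_apply_f_zero p w
        refine (ShortComplex.exact_and_epi_g_iff_of_iso ?_).2 ⟨hexact, hepi⟩
        exact ShortComplex.isoMk (Iso.refl (K.X 1)) (Iso.refl (K.X 0)) (Iso.refl Z)
          ((Category.id_comp _).trans (Category.comp_id _).symm)
          ((Category.id_comp p).trans (hp.symm.trans (Category.comp_id _).symm))
      · exact K.shape 0 0 (by simp)
      all_goals rfl
    | succ n =>
      rw [quasiIsoAt_iff_exactAt' _ _ (ChainComplex.exactAt_succ_single_obj _ _)]
      exact hK n

/-- A projective resolution of `S.X₁`, spliced with `S.X₁ ⟶ S.X₂`, resolves `S.X₃` when `S` is short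
exact with projective middle term. -/
noncomputable def projectiveResolutionOfShortExact (hS : S.ShortExact) [Projective S.X₂]
    (P : ProjectiveResolution S.X₁) : ProjectiveResolution S.X₃ where
  complex := spliceComplex P S.f
  projective n := by
    cases n with
    | zero => exact ‹Projective S.X₂›
    | succ n => exact P.projective n
  π := (ChainComplex.toSingle₀Equiv _ _).symm ⟨S.g, resolutionAugmentation_comp_comp P⟩
  quasiIso := by
    have := hS.mono_f
    exact quasiIso_toSingle₀_of_exact S.g _ (exact_resolutionAugmentation_comp hS.exact P)
      hS.epi_g (spliceComplex_exactAt_succ P S.f)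

/-- The homology of `X₁ ⟶ X₂ ⟶ X₃` as the cokernel of the map from `X₁` to a given kernel `i` of
`X₂ ⟶ X₃`. -/
noncomputable def homologyIsoCokernel {T : ShortComplex C} {K : C} (e : T.X₁ ⟶ K) (i : K ⟶ T.X₂)
    (hmono : Mono i) (w : i ≫ T.g = 0) (hexact : (ShortComplex.mk i T.g w).Exact)
    (fac : e ≫ i = T.f) : T.homology ≅ cokernel e :=
  let h : T.LeftHomologyData :=
    { K := K
      H := cokernel (hexact.fIsKernel.lift (KernelFork.ofι T.f T.zero))
      i := i
      π := cokernel.π _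
      wi := w
      hi := hexact.fIsKernel
      wπ := cokernel.condition _
      hπ := cokernelIsCokernel _ }
  h.homologyIso ≪≫ cokernelIsoOfEq (by
    rw [← cancel_mono i, fac]
    exact hexact.lift_f T.f T.zero)

end Abelian

section Ext

open Limits

variable {R : Type*} [Ring R] {C : Type*} [Category* C] [Abelian C] [Linear R C]
  {S : ShortComplex C}

lemma injective_leftComp_of_epi {A B : C} (f : A ⟶ B) [Epi f] (Y : C) :
    Function.Injective (Linear.leftComp R Y f) :=
  fun _ _ h => (cancel_epi f).1 h

lemma exact_leftComp_of_exact (hS : S.Exact) [Epi S.g] (Y : C) :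
    Function.Exact (Linear.leftComp R Y S.g) (Linear.leftComp R Y S.f) := by
  intro k
  refine ⟨fun hk => ⟨hS.desc k hk, hS.g_desc k hk⟩, ?_⟩
  rintro ⟨k, rfl⟩
  exact (S.zero_assoc k).trans zero_comp

variable [EnoughProjectives C]

/-- For `S` short exact with projective middle term, `Ext¹(X₃, Y)` is the cokernel of
`Hom(X₂, Y) ⟶ Hom(X₁, Y)`. -/
noncomputable def extOneIso (hS : S.ShortExact) [Projective S.X₂] (Y : C) :
    ((Ext R C 1).obj (.op S.X₃)).obj Y ≅ cokernel (((linearYoneda R C).obj Y).map S.f.op) :=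
  let P := ProjectiveResolution.of S.X₁
  let Q := projectiveResolutionOfShortExact hS P
  let F := (linearYoneda R C).obj Y
  have hmono : Mono (F.map (resolutionAugmentation P).op) :=
    (ModuleCat.mono_iff_injective _).2 (injective_leftComp_of_epi (R := R) _ _)
  have hexact := exact_leftComp_of_exact (R := R) (exact_d_resolutionAugmentation P) Y
  Q.isoExt 1 Y ≪≫
    HomologicalComplex.homologyIsoSc' _ 0 1 2 (by simp) (by simp) ≪≫
    homologyIsoCokernel (T := (Q.complex.linearYonedaObj R Y).sc' 0 1 2)
      (F.map S.f.op) (F.map (resolutionAugmentation P).op) hmono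
      (by ext x; exact hexact.apply_apply_eq_zero x)
      (ModuleCat.shortComplex_exact _ hexact) (F.map_comp _ _).symm

/-- Dimension shifting: for `S` short exact with projective middle term, `Extⁿ⁺²(X₃, Y)` is
`Extⁿ⁺¹(X₁, Y)`. -/
noncomputable def extSuccSuccIso (hS : S.ShortExact) [Projective S.X₂] (n : ℕ) (Y : C) :
    ((Ext R C (n + 2)).obj (.op S.X₃)).obj Y ≅ ((Ext R C (n + 1)).obj (.op S.X₁)).obj Y :=
  let P := ProjectiveResolution.of S.X₁
  let Q := projectiveResolutionOfShortExact hS P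
  -- `Q` is `P` shifted by one degree, so the two cochain complexes agree on the nose here.
  let e : (Q.complex.linearYonedaObj R Y).sc' (n + 1) (n + 2) (n + 3) ≅
      (P.complex.linearYonedaObj R Y).sc' n (n + 1) (n + 2) := Iso.refl _
  Q.isoExt (n + 2) Y ≪≫
    HomologicalComplex.homologyIsoSc' _ (n + 1) (n + 2) (n + 3) (by simp) (by simp) ≪≫
    ShortComplex.homologyMapIso e ≪≫
    (HomologicalComplex.homologyIsoSc' _ n (n + 1) (n + 2) (by simp) (by simp)).symm ≪≫
    (P.isoExt (n + 1) Y).symm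

end Ext

section Module

variable {R X₁ X₂ X₃ : Type} [CommRing R] [AddCommGroup X₁] [Module R X₁] [AddCommGroup X₂]
  [Module R X₂] [AddCommGroup X₃] [Module R X₃] [Module.Projective R X₂]
  {f : X₁ →ₗ[R] X₂} {g : X₂ →ₗ[R] X₃}

/-- For `0 → X₁ → X₂ → X₃ → 0` exact with `X₂` projective, `Ext¹(X₃, Y)` is `Hom(X₁, Y)` modulo the
maps that extend to `X₂`. -/
noncomputable def extGroupOneEquiv (hf : Function.Injective f) (hfg : Function.Exact f g)
    (hg : Function.Surjective g) (Y : Type) [AddCommGroup Y] [Module R Y] :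
    extGroup R 1 X₃ Y ≃ₗ[R] (X₁ →ₗ[R] Y) ⧸ LinearMap.range (LinearMap.lcomp R Y f) :=
  let S : ShortComplex (ModuleCat R) := .moduleCatMk f g hfg.linearMap_comp_eq_zero
  have : Projective S.X₂ := ModuleCat.projective_of_categoryTheory_projective (.of R X₂)
  (extOneIso (ModuleCat.shortComplex_shortExact S hfg hf hg) (.of R Y) ≪≫
      ModuleCat.cokernelIsoRangeQuotient _).toLinearEquiv ≪≫ₗ
    Submodule.Quotient.equiv _ _ ModuleCat.homLinearEquiv
      ((LinearMap.range_comp _ _).symm.trans <|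
        LinearMap.range_comp_of_range_eq_top (f := (ModuleCat.homLinearEquiv (S := R)
          (M := .of R X₂) (N := .of R Y)).toLinearMap) (LinearMap.lcomp R Y f)
          (ModuleCat.homLinearEquiv (S := R)).range)

/-- Dimension shifting: for `0 → X₁ → X₂ → X₃ → 0` exact with `X₂` projective, `Extⁿ⁺²(X₃, Y)` is
`Extⁿ⁺¹(X₁, Y)`. -/
noncomputable def extGroupSuccSuccEquiv (hf : Function.Injective f) (hfg : Function.Exact f g)
    (hg : Function.Surjective g) (n : ℕ) (Y : Type) [AddCommGroup Y] [Module R Y] :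
    extGroup R (n + 2) X₃ Y ≃ₗ[R] extGroup R (n + 1) X₁ Y :=
  let S : ShortComplex (ModuleCat R) := .moduleCatMk f g hfg.linearMap_comp_eq_zero
  have : Projective S.X₂ := ModuleCat.projective_of_categoryTheory_projective (.of R X₂)
  (extSuccSuccIso (ModuleCat.shortComplex_shortExact S hfg hf hg) n (.of R Y)).toLinearEquiv

end Module

section Dual

open Module

variable {R M P₀ P₁ : Type*} [CommRing R] [AddCommGroup M] [Module R M]
  [AddCommGroup P₀] [Module R P₀] [AddCommGroup P₁] [Module R P₁]
  {φ : P₁ →ₗ[R] P₀} {π : P₀ →ₗ[R] M}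

lemma exact_dualMap_of_exact (h : Function.Exact φ π) (hπ : Function.Surjective π) :
    Function.Exact π.dualMap φ.dualMap := by
  rw [LinearMap.dualMap_eq_lcomp, LinearMap.dualMap_eq_lcomp]
  exact LinearMap.exact_lcomp_of_exact_of_surjective R h hπ

lemma exact_dualMap_rangeRestrict (h : Function.Exact φ π) (hπ : Function.Surjective π) :
    Function.Exact π.dualMap φ.dualMap.rangeRestrict := fun ξ =>
  Subtype.ext_iff.trans (exact_dualMap_of_exact h hπ ξ)

variable [IsReflexive R P₀]

lemma range_dualMap_dualMap_eq_range_eval (hπ : Function.Surjective π) :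
    LinearMap.range π.dualMap.dualMap = LinearMap.range (Dual.eval R M) := by
  rw [← Dual.eval_comp_comp_evalEquiv_eq]
  exact LinearMap.range_comp_of_range_eq_top _
    (LinearMap.range_eq_top.2 (hπ.comp (evalEquiv R P₀).symm.surjective))

variable (φ π) in
/-- The map `(range φ*)* → M` given by `(range φ*)* → P₀** ≅ P₀ → M`. It induces the identification
of `Ext¹(Coker φ*, R)` with the kernel of `M → M**`. -/
noncomputable def dualRangeDualMap : Dual R (LinearMap.range φ.dualMap) →ₗ[R] M :=
  π ∘ₗ (evalEquiv R P₀).symm ∘ₗ φ.dualMap.rangeRestrict.dualMap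

lemma eval_comp_dualRangeDualMap :
    Dual.eval R M ∘ₗ dualRangeDualMap φ π =
      π.dualMap.dualMap ∘ₗ φ.dualMap.rangeRestrict.dualMap := by
  rw [← Dual.eval_comp_comp_evalEquiv_eq]
  rfl

lemma range_dualRangeDualMap (h : Function.Exact φ π) (hπ : Function.Surjective π) :
    LinearMap.range (dualRangeDualMap φ π) = LinearMap.ker (Dual.eval R M) := by
  have hρ : Function.Exact φ.dualMap.rangeRestrict.dualMap π.dualMap.dualMap :=
    exact_dualMap_of_exact (M := LinearMap.range φ.dualMap)
      (exact_dualMap_rangeRestrict h hπ) φ.dualMap.surjective_rangeRestrict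
  apply le_antisymm
  · rw [LinearMap.range_le_ker_iff, eval_comp_dualRangeDualMap]
    exact hρ.linearMap_comp_eq_zero
  · intro m hm
    obtain ⟨p, rfl⟩ := hπ m
    obtain ⟨ξ, hξ⟩ := (hρ (Dual.eval R P₀ p)).1 hm
    exact ⟨ξ, congrArg π ((evalEquiv R P₀).symm_apply_eq.2 hξ)⟩

lemma ker_dualRangeDualMap [IsReflexive R P₁] (h : Function.Exact φ π) :
    LinearMap.ker (dualRangeDualMap φ π) =
      LinearMap.range (LinearMap.range φ.dualMap).subtype.dualMap := by
  have hρ : Function.Injective φ.dualMap.rangeRestrict.dualMap :=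
    LinearMap.dualMap_injective_of_surjective φ.dualMap.surjective_rangeRestrict
  ext ξ
  calc dualRangeDualMap φ π ξ = 0
      ↔ ∃ p, φ p = (evalEquiv R P₀).symm (φ.dualMap.rangeRestrict.dualMap ξ) := h _
    _ ↔ ∃ p, (LinearMap.range φ.dualMap).subtype.dualMap (evalEquiv R P₁ p) = ξ :=
      exists_congr fun p => by
        rw [LinearEquiv.eq_symm_apply, ← hρ.eq_iff]
        rfl
    _ ↔ ∃ η, (LinearMap.range φ.dualMap).subtype.dualMap η = ξ :=
      ((evalEquiv R P₁).surjective.exists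
        (p := fun η => (LinearMap.range φ.dualMap).subtype.dualMap η = ξ)).symm

end Dual

section AuslanderBridger

open Module

variable {R M P₀ P₁ : Type} [CommRing R] [AddCommGroup M] [Module R M]
  [AddCommGroup P₀] [Module R P₀] [Module.Finite R P₀] [Projective R P₀]
  [AddCommGroup P₁] [Module R P₁] [Module.Finite R P₁] [Projective R P₁]
  {φ : P₁ →ₗ[R] P₀} {π : P₀ →ₗ[R] M}

/-- `Ext¹(D(M), R)` is the kernel of the evaluation map `M → M**`, where `D(M) = Coker φ*`. -/
noncomputable def extOneDualCokerEquiv (h : Function.Exact φ π) (hπ : Function.Surjective π) :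
    extGroup R 1 (Dual R P₁ ⧸ LinearMap.range φ.dualMap) R ≃ₗ[R] LinearMap.ker (Dual.eval R M) :=
  extGroupOneEquiv (LinearMap.range φ.dualMap).subtype_injective
      (LinearMap.exact_subtype_mkQ _) (Submodule.mkQ_surjective _) R ≪≫ₗ
    Submodule.quotEquivOfEq _ _ (ker_dualRangeDualMap h).symm ≪≫ₗ
    (dualRangeDualMap φ π).quotKerEquivRange ≪≫ₗ
    LinearEquiv.ofEq _ _ (range_dualRangeDualMap h hπ)

/-- `Ext²(D(M), R)` is the cokernel of the evaluation map `M → M**`, where `D(M) = Coker φ*`. -/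
noncomputable def extTwoDualCokerEquiv (h : Function.Exact φ π) (hπ : Function.Surjective π) :
    extGroup R 2 (Dual R P₁ ⧸ LinearMap.range φ.dualMap) R ≃ₗ[R]
      Dual R (Dual R M) ⧸ LinearMap.range (Dual.eval R M) :=
  extGroupSuccSuccEquiv (LinearMap.range φ.dualMap).subtype_injective
      (LinearMap.exact_subtype_mkQ _) (Submodule.mkQ_surjective _) 0 R ≪≫ₗ
    extGroupOneEquiv (X₃ := LinearMap.range φ.dualMap)
      (LinearMap.dualMap_injective_of_surjective hπ) (exact_dualMap_rangeRestrict h hπ)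
      φ.dualMap.surjective_rangeRestrict R ≪≫ₗ
    Submodule.quotEquivOfEq _ _ (range_dualMap_dualMap_eq_range_eval hπ)

theorem auslander_bridger_exact_sequence_general
    (h : Function.Exact φ π) (hπ : Function.Surjective π) :
    ∃ (g₁ : extGroup R 1 (Dual R P₁ ⧸ LinearMap.range φ.dualMap) R →ₗ[R] M)
      (g₂ : Dual R (Dual R M) →ₗ[R] extGroup R 2 (Dual R P₁ ⧸ LinearMap.range φ.dualMap) R),
      Function.Injective g₁ ∧
      Function.Exact g₁ (Dual.eval R M) ∧
      Function.Exact (Dual.eval R M) g₂ ∧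
      Function.Surjective g₂ := by
  let e₁ := extOneDualCokerEquiv h hπ
  let e₂ := extTwoDualCokerEquiv h hπ
  refine ⟨(LinearMap.ker (Dual.eval R M)).subtype ∘ₗ e₁, e₂.symm ∘ₗ
    (LinearMap.range (Dual.eval R M)).mkQ, ?_, ?_, ?_, ?_⟩
  · exact Subtype.val_injective.comp e₁.injective
  · rw [LinearMap.exact_iff, LinearEquiv.range_comp, Submodule.range_subtype]
  · rw [LinearMap.exact_iff, LinearEquiv.ker_comp, Submodule.ker_mkQ]
  · exact e₂.symm.surjective.comp (Submodule.mkQ_surjective _)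

end AuslanderBridger

/-- (Auslander–Bridger sequence) For a finite module `M` over a commutative
Noetherian ring `R` with a finite free presentation `P₁ →φ P₀ → M → 0` and
`D(M) = Coker(φ*)`, there is an exact sequence
`0 → Ext¹_R(D(M), R) → M →f M** → Ext²_R(D(M), R) → 0`,
where `f` is the evaluation map into the bidual. -/
theorem auslander_bridger_exact_sequence
    (R : Type) [CommRing R] [IsNoetherianRing R]
    (M : Type) [AddCommGroup M] [Module R M] [Module.Finite R M]
    (n₁ n₀ : ℕ) (φ : (Fin n₁ → R) →ₗ[R] (Fin n₀ → R)) (π : (Fin n₀ → R) →ₗ[R] M)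
    (hex : Function.Exact φ π) (hsurj : Function.Surjective π) :
    ∃ (g₁ : extGroup R 1 (Module.Dual R (Fin n₁ → R) ⧸ LinearMap.range φ.dualMap) R →ₗ[R] M)
      (g₂ : Module.Dual R (Module.Dual R M) →ₗ[R]
        extGroup R 2 (Module.Dual R (Fin n₁ → R) ⧸ LinearMap.range φ.dualMap) R),
      Function.Injective g₁ ∧
      Function.Exact g₁ (Module.Dual.eval R M) ∧
      Function.Exact (Module.Dual.eval R M) g₂ ∧
      Function.Surjective g₂ :=
  auslander_bridger_exact_sequence_general hex hsurj
end
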